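/- Let F be a real Hilbert space, U ⊆ F a nonempty convex set contained in an open convex set A on which Φ : F → ℝ is Fréchet differentiable. Let X be an F-valued Bochner-integrable random element on a probability space with X ∈ U almost surely, E‖X‖ < ∞ and E|Φ(X)| < ∞, and suppose the Bochner mean f̄ = E[X] belongs to U. Then for every g ∈ U for which E[d_Φ(X,g)] is finite, the bias–variance decomposition holds: E[d_Φ(X,g)] = E[d_Φ(X,f̄)] + d_Φ(f̄,g). -/

import Mathlib

open scoped RealInnerProductSpace
open MeasureTheory

/-- The functional Bregman divergence `d_Φ(f,g) = Φ(f) − Φ(g) − ⟪∇Φ(g), f − g⟫`. -/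
noncomputable def bregmanDiv {F : Type*} [NormedAddCommGroup F] [InnerProductSpace ℝ F]
    (Φ : F → ℝ) (Φ' : F → F) (f g : F) : ℝ :=
  Φ f - Φ g - ⟪Φ' g, f - g⟫

/-- The expected Bregman divergence to a fixed point depends on `X` only through `E[Φ(X)]` and the
Bochner mean `E[X]`. -/
theorem integral_bregmanDiv
    {F : Type*} [NormedAddCommGroup F] [InnerProductSpace ℝ F] [CompleteSpace F]
    {Ω : Type*} [MeasurableSpace Ω] (P : Measure Ω) [IsProbabilityMeasure P]
    (Φ : F → ℝ) (Φ' : F → F) {X : Ω → F} (hX : Integrable X P)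
    (hΦX : Integrable (fun ω => Φ (X ω)) P) (g : F) :
    ∫ ω, bregmanDiv Φ Φ' (X ω) g ∂P
      = (∫ ω, Φ (X ω) ∂P) - Φ g - ⟪Φ' g, (∫ ω, X ω ∂P) - g⟫ := by
  have hXg : Integrable (fun ω => X ω - g) P := hX.sub (integrable_const g)
  have hΦXg : Integrable (fun ω => Φ (X ω) - Φ g) P := hΦX.sub (integrable_const _)
  simp only [bregmanDiv]
  rw [integral_sub hΦXg (hXg.const_inner _),
    integral_sub hΦX (integrable_const _), integral_inner hXg,
    integral_sub hX (integrable_const _)]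
  simp

/-- Bias–variance decomposition for the functional Bregman divergence: if `X` is a
Bochner-integrable random element of a real Hilbert space taking values a.s. in a nonempty
convex set `U` contained in an open convex set `A` on which `Φ` is Fréchet differentiable
(with Riesz gradient `Φ'`), `Φ(X)` is integrable, and the Bochner mean `f̄ = E[X]` lies in
`U`, then for every `g ∈ U` with `E[d_Φ(X,g)]` finite,
`E[d_Φ(X,g)] = E[d_Φ(X,f̄)] + d_Φ(f̄,g)`. -/
theorem bregman_bias_variance
    {F : Type*} [NormedAddCommGroup F] [InnerProductSpace ℝ F] [CompleteSpace F]
    {Ω : Type*} [MeasurableSpace Ω] (P : Measure Ω) [IsProbabilityMeasure P]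
    (A U : Set F) (hA : IsOpen A) (hAconv : Convex ℝ A)
    (hUne : U.Nonempty) (hUconv : Convex ℝ U) (hUA : U ⊆ A)
    (Φ : F → ℝ) (Φ' : F → F)
    (hdiff : ∀ x ∈ A, HasGradientAt Φ (Φ' x) x)
    (X : Ω → F)
    (hXint : Integrable X P)
    (hXU : ∀ᵐ ω ∂P, X ω ∈ U)
    (hΦX : Integrable (fun ω => Φ (X ω)) P)
    (fbar : F) (hfbar : fbar = ∫ ω, X ω ∂P) (hfbarU : fbar ∈ U)
    (g : F) (hg : g ∈ U)
    (hint : Integrable (fun ω => bregmanDiv Φ Φ' (X ω) g) P) :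
    ∫ ω, bregmanDiv Φ Φ' (X ω) g ∂P
      = (∫ ω, bregmanDiv Φ Φ' (X ω) fbar ∂P) + bregmanDiv Φ Φ' fbar g := by
  rw [integral_bregmanDiv P Φ Φ' hXint hΦX, integral_bregmanDiv P Φ Φ' hXint hΦX, ← hfbar]
  simp only [bregmanDiv, sub_self, inner_zero_right]
  ring
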